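/- Let ε ∈ (0, 1/2], n ≥ 1, and let POS ⊆ {1,…,n} be the (1+ε)-geometric index set with associated prev and next. Let o ∈ ℝ^n be non-increasing with o ≥ 0 entrywise and o_1 = 1, and let ρ : POS → ℝ_{≥0} be non-increasing (i.e., ρ_k ≥ ρ_{k'} for k ≤ k' in POS) with ρ_k ≤ o_k + 2ε/n for every k ∈ POS. Let ρ⃗ ∈ ℝ^n be the expansion of ρ. Then Top_k(ρ⃗) ≤ (1+3ε)·Top_k(o) for every k ∈ POS, Top_k(ρ⃗) ≤ (1+11ε)·Top_k(o) for every k ∈ {1,…,n}, and consequently ψ(ρ⃗) ≤ (1+11ε)·ψ(o) for every symmetric monotone norm ψ : ℝ^n → ℝ. -/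

import Mathlib

/-- The top-`k` norm: the sum of the `k` largest values among `|u 1|, …, |u n|`,
expressed as the supremum over all size-`k` subsets of the sum of absolute values. -/
noncomputable def topk {n : ℕ} (k : ℕ) (u : Fin n → ℝ) : ℝ :=
  sSup {t : ℝ | ∃ S : Finset (Fin n), S.card = k ∧ t = ∑ j ∈ S, |u j|}

/-- The iterative sequence generating the `(1+ε)`-geometric index set:
`t₀ = 1` and `t_{s+1} = min(n, ⌈(1+ε)·t_s⌉)`. -/
noncomputable def posSeq (n : ℕ) (ε : ℝ) : ℕ → ℕ
  | 0 => 1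
  | s + 1 => min n ⌈(1 + ε) * (posSeq n ε s : ℝ)⌉₊

/-- The `(1+ε)`-geometric index set `POS ⊆ {1,…,n}`. -/
def geomPOS (n : ℕ) (ε : ℝ) : Set ℕ := Set.range (posSeq n ε)

/-- `prev(k)`: the largest element of `POS` smaller than `k` (and `prev 1 = 0`). -/
noncomputable def prevIdx (POS : Set ℕ) (k : ℕ) : ℕ := sSup {t | t ∈ POS ∧ t < k}

/-- The `k`-th entry (1-indexed) of a vector `u ∈ ℝ^n`, for `k ∈ {1,…,n}`. -/
def ent {n : ℕ} (u : Fin n → ℝ) (k : ℕ) : ℝ :=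
  if h : k - 1 < n then u ⟨k - 1, h⟩ else 0

/-- The expansion `ρ⃗ ∈ ℝ^n` of `ρ : POS → ℝ`: `ρ⃗_k = ρ_k` if `k ∈ POS`,
and `ρ⃗_k = ρ_{prev(k)}` otherwise (entries 1-indexed). -/
noncomputable def expandVec (n : ℕ) (POS : Set ℕ) (ρ : ℕ → ℝ) : Fin n → ℝ :=
  fun i =>
    haveI := Classical.dec ((i.val + 1) ∈ POS)
    if (i.val + 1) ∈ POS then ρ (i.val + 1) else ρ (prevIdx POS (i.val + 1))

/-! The expansion `ρ⃗` is again nonnegative and non-increasing, so `Top_k` of `ρ⃗` and of `o` are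
sums of the first `k` entries. Write `⌊i⌋` for the largest index of `POS` up to `i`; then
`ρ⃗ i ≤ o ⌊i⌋ + 2ε o₁ / n` and `i ≤ (1 + ε) ⌊i⌋`. Hence at most `(1 + ε) m` indices have `⌊i⌋ ≤ m`,
and Abel summation gives `∑_{i ≤ k} o ⌊i⌋ ≤ (1 + ε) ∑_{i ≤ k} o i`, while the additive errors sum to
at most `2ε o₁ ≤ 2ε Top_k(o)`. A bound on all top-`k` norms carries over to every symmetric monotone
norm (Ky Fan dominance): write the norm of a vector as its pairing with nonnegative weights from
Hahn–Banach, sort the weights, and apply Abel summation once more. -/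

open Finset

section AbelSummation

theorem sum_mul_le_sum_mul_of_sum_castLE_le {R : Type*} [CommRing R] [PartialOrder R]
    [IsOrderedRing R] {n : ℕ} {a u v : Fin n → R} (ha : Antitone a) (ha₀ : 0 ≤ a)
    (h : ∀ k (hk : k ≤ n), ∑ i : Fin k, u (i.castLE hk) ≤ ∑ i : Fin k, v (i.castLE hk)) :
    ∑ i, a i * u i ≤ ∑ i, a i * v i := by
  induction n with
  | zero => simp
  | succ n ih =>
    have split_last (w : Fin (n + 1) → R) : ∑ i, a i * w i =
        ∑ i : Fin n, (a i.castSucc - a (.last n)) * w i.castSucc + a (.last n) * ∑ i, w i := by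
      simp only [Fin.sum_univ_castSucc, sub_mul, sum_sub_distrib, mul_add, mul_sum]
      ring
    rw [split_last u, split_last v]
    refine add_le_add (ih (fun i j hij ↦ ?_) (fun i ↦ ?_) fun k hk ↦ h k (hk.trans n.le_succ))
      (mul_le_mul_of_nonneg_left (h (n + 1) le_rfl) (ha₀ _))
    · exact sub_le_sub_right (ha (Fin.castSucc_le_castSucc_iff.2 hij)) _
    · exact sub_nonneg.2 (ha (Fin.le_last _))

theorem sum_comp_le_mul_sum {k : ℕ} {a : Fin k → ℝ} (ha : Antitone a) (ha₀ : 0 ≤ a) {c : ℝ}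
    (hc : 0 ≤ c) {q : Fin k → Fin k} (hq : ∀ i : Fin k, (i + 1 : ℝ) ≤ c * (q i + 1)) :
    ∑ i, a (q i) ≤ c * ∑ i, a i := by
  have card_fibers_le (m : ℕ) (hm : m ≤ k) :
      ∑ j : Fin m, (#{i | q i = j.castLE hm} : ℝ) ≤ ∑ _j : Fin m, c := by
    have hcm : 0 ≤ c * m := by positivity
    have maps_to : ∀ i ∈ ({i | q i ∈ univ.map (Fin.castLEEmb hm)} : Finset (Fin k)),
        (i : ℕ) ∈ range ⌊c * m⌋₊ := by
      simp only [mem_filter_univ, mem_map, mem_univ, true_and, mem_range]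
      rintro i ⟨j, hj⟩
      have hqm : (q i : ℝ) + 1 ≤ m := by
        rw [← hj]
        exact_mod_cast j.isLt
      refine Nat.le_floor ?_
      push_cast
      exact (hq i).trans (mul_le_mul_of_nonneg_left hqm hc)
    calc ∑ j : Fin m, (#{i | q i = j.castLE hm} : ℝ)
        = #{i | q i ∈ univ.map (Fin.castLEEmb hm)} := by
          rw [← sum_card_fiberwise_eq_card_filter, sum_map, Nat.cast_sum]
          rfl
      _ ≤ ⌊c * m⌋₊ := by
          exact_mod_cast (card_le_card_of_injOn _ maps_to Fin.val_injective.injOn).trans_eq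
            (card_range _)
      _ ≤ ∑ _j : Fin m, c := by simpa [mul_comm] using Nat.floor_le hcm
  calc ∑ i, a (q i) = ∑ j, a j * #{i | q i = j} := by
        rw [← sum_fiberwise' univ q a]
        simp [mul_comm]
    _ ≤ ∑ j, a j * c := sum_mul_le_sum_mul_of_sum_castLE_le ha ha₀ card_fibers_le
    _ = c * ∑ i, a i := by rw [← sum_mul, mul_comm]

end AbelSummation

section TopK

variable {n : ℕ} {u : Fin n → ℝ}

theorem bddAbove_sum_abs_of_card_eq (k : ℕ) (u : Fin n → ℝ) :
    BddAbove {t : ℝ | ∃ S : Finset (Fin n), #S = k ∧ t = ∑ j ∈ S, |u j|} := by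
  refine ⟨∑ j, |u j|, ?_⟩
  rintro _ ⟨S, -, rfl⟩
  exact sum_le_univ_sum_of_nonneg fun _ ↦ abs_nonneg _

theorem sum_abs_le_topk (S : Finset (Fin n)) (u : Fin n → ℝ) : ∑ j ∈ S, |u j| ≤ topk #S u :=
  le_csSup (bddAbove_sum_abs_of_card_eq _ u) ⟨S, rfl, rfl⟩

theorem topk_le {k : ℕ} {b : ℝ} (hb : 0 ≤ b)
    (h : ∀ S : Finset (Fin n), #S = k → ∑ j ∈ S, |u j| ≤ b) : topk k u ≤ b := by
  refine Real.sSup_le ?_ hb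
  rintro _ ⟨S, hS, rfl⟩
  exact h S hS

theorem topk_nonneg (k : ℕ) (u : Fin n → ℝ) : 0 ≤ topk k u := by
  refine Real.sSup_nonneg ?_
  rintro _ ⟨S, -, rfl⟩
  exact sum_nonneg fun _ _ ↦ abs_nonneg _

theorem sum_abs_castLE_le_topk {k : ℕ} (hk : k ≤ n) (u : Fin n → ℝ) :
    ∑ i : Fin k, |u (i.castLE hk)| ≤ topk k u := by
  simpa using sum_abs_le_topk (univ.map (Fin.castLEEmb hk)) u

theorem topk_comp_perm (k : ℕ) (u : Fin n → ℝ) (σ : Equiv.Perm (Fin n)) :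
    topk k (u ∘ σ) = topk k u := by
  have topk_comp_le (v : Fin n → ℝ) (τ : Equiv.Perm (Fin n)) : topk k (v ∘ τ) ≤ topk k v :=
    topk_le (topk_nonneg k v) fun S hS ↦ by simpa [hS] using sum_abs_le_topk (S.map τ.toEmbedding) v
  refine (topk_comp_le u σ).antisymm ?_
  simpa [Function.comp_assoc] using topk_comp_le (u ∘ σ) σ⁻¹

theorem val_le_val_of_strictMono {k : ℕ} {e : Fin k → Fin n} (he : StrictMono e) (i : Fin k) :
    (i : ℕ) ≤ e i := by
  induction hi : (i : ℕ) generalizing i with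
  | zero => exact Nat.zero_le _
  | succ m ih =>
    let j : Fin k := ⟨m, by omega⟩
    exact (Nat.succ_le_succ (ih j rfl)).trans (he (show j < i by simp [Fin.lt_def, j, hi]))

theorem topk_eq_sum_castLE_of_antitone (hu : Antitone u) (hu₀ : 0 ≤ u) {k : ℕ} (hk : k ≤ n) :
    topk k u = ∑ i : Fin k, u (i.castLE hk) := by
  refine le_antisymm (topk_le (sum_nonneg fun _ _ ↦ hu₀ _) fun S hS ↦ ?_) ?_
  · rw [← S.map_orderEmbOfFin_univ hS, sum_map]
    refine sum_le_sum fun i _ ↦ ?_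
    have hi : i.castLE hk ≤ S.orderEmbOfFin hS i :=
      val_le_val_of_strictMono (S.orderEmbOfFin hS).strictMono i
    simpa [abs_of_nonneg (hu₀ _)] using hu hi
  · simpa only [abs_of_nonneg (hu₀ _)] using sum_abs_castLE_le_topk hk u

theorem ent_one_le_topk {k : ℕ} (u : Fin n → ℝ) (hk : 1 ≤ k) (hkn : k ≤ n) :
    ent u 1 ≤ topk k u := by
  let i₀ : Fin k := ⟨0, hk⟩
  calc ent u 1 = u (i₀.castLE hkn) := dif_pos (hk.trans hkn)
    _ ≤ |u (i₀.castLE hkn)| := le_abs_self _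
    _ ≤ ∑ i : Fin k, |u (i.castLE hkn)| :=
        single_le_sum (f := fun i : Fin k ↦ |u (i.castLE hkn)|) (fun _ _ ↦ abs_nonneg _)
          (mem_univ i₀)
    _ ≤ topk k u := sum_abs_castLE_le_topk hkn u

theorem div_mul_ent_one_le_topk {k : ℕ} (u : Fin n → ℝ) (hk : k ≤ n) :
    (k / n : ℝ) * ent u 1 ≤ topk k u := by
  rcases k.eq_zero_or_pos with rfl | hk₀
  · simpa using topk_nonneg 0 u
  · calc (k / n : ℝ) * ent u 1 ≤ k / n * topk k u := by gcongr; exact ent_one_le_topk u hk₀ hk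
      _ ≤ topk k u := mul_le_of_le_one_left (topk_nonneg k u)
          (div_le_one_of_le₀ (by exact_mod_cast hk) n.cast_nonneg)

end TopK

section FanDominance

theorem exists_dual_apply_eq_seminorm {E : Type*} [AddCommGroup E] [Module ℝ E]
    (p : Seminorm ℝ E) (x : E) : ∃ f : Module.Dual ℝ E, f x = p x ∧ ∀ y, |f y| ≤ p y := by
  let g : E →ₗ.[ℝ] ℝ := .mkSpanSingleton' x (p x) fun c hcx ↦ by
    simpa [map_smul_eq_mul] using congr_arg p hcx
  have g_le (y : g.domain) : g y ≤ p y := by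
    obtain ⟨y, hy⟩ := y
    obtain ⟨t, rfl⟩ := Submodule.mem_span_singleton.1 hy
    have hgt : g ⟨t • x, hy⟩ = t * p x := LinearPMap.mkSpanSingleton'_apply ..
    simpa [map_smul_eq_mul] using hgt.trans_le
      (mul_le_mul_of_nonneg_right (le_abs_self t) (apply_nonneg p x))
  obtain ⟨f, hfg, hfp⟩ := Module.Dual.exists_extension_of_le_seminorm_real g.domain g.toFun g_le
  have hx : x ∈ Submodule.span ℝ {x} := Submodule.mem_span_singleton_self x
  exact ⟨f, (hfg ⟨x, hx⟩).trans (LinearPMap.mkSpanSingleton'_apply_self ..), hfp⟩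

theorem exists_nonneg_weights_sum_mul_eq {ι : Type*} [Fintype ι] {p : Seminorm ℝ (ι → ℝ)}
    (hp : MonotoneOn p (Set.Ici 0)) {u : ι → ℝ} (hu : 0 ≤ u) :
    ∃ w : ι → ℝ, 0 ≤ w ∧ ∑ i, w i * u i = p u ∧ ∀ v, 0 ≤ v → ∑ i, w i * v i ≤ p v := by
  classical
  obtain ⟨f, hfu, hfp⟩ := exists_dual_apply_eq_seminorm p u
  let y : ι → ℝ := fun i ↦ f fun j ↦ if i = j then 1 else 0
  have f_eq (v : ι → ℝ) : f v = ∑ i, y i * v i := by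
    simpa [mul_comm] using f.pi_apply_eq_sum_univ v
  have posPart_le (v : ι → ℝ) (hv : 0 ≤ v) : ∑ i, (y i)⁺ * v i ≤ p v := by
    -- Zeroing the entries of `v` with negative weight turns `y` into `y⁺` and lowers `p`.
    let z : ι → ℝ := {i | 0 ≤ y i}.indicator v
    have hz : 0 ≤ z := Set.indicator_nonneg fun i _ ↦ hv i
    have hzv : z ≤ v := Set.indicator_le_self' fun i _ ↦ hv i
    calc ∑ i, (y i)⁺ * v i = f z := by
          rw [f_eq]
          refine sum_congr rfl fun i _ ↦ ?_
          by_cases hi : 0 ≤ y i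
          · simp [z, hi]
          · simp [z, hi, (not_le.1 hi).le]
      _ ≤ p z := (le_abs_self _).trans (hfp z)
      _ ≤ p v := hp hz hv hzv
  refine ⟨fun i ↦ (y i)⁺, fun i ↦ posPart_nonneg _, (posPart_le u hu).antisymm ?_, posPart_le⟩
  rw [← hfu, f_eq]
  exact sum_le_sum fun i _ ↦ mul_le_mul_of_nonneg_right (le_posPart _) (hu i)

theorem exists_perm_antitone_comp {α : Type*} [LinearOrder α] {n : ℕ} (f : Fin n → α) :
    ∃ σ : Equiv.Perm (Fin n), Antitone (f ∘ σ) :=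
  ⟨Tuple.sort (OrderDual.toDual ∘ f), Tuple.monotone_sort (OrderDual.toDual ∘ f)⟩

theorem seminorm_le_mul_of_topk_le_mul {n : ℕ} {p : Seminorm ℝ (Fin n → ℝ)}
    (hp : MonotoneOn p (Set.Ici 0)) (hp_symm : ∀ w (π : Equiv.Perm (Fin n)), p (w ∘ π) = p w)
    {u v : Fin n → ℝ} (hu : 0 ≤ u) (hv : 0 ≤ v) {c : ℝ} (hc : 0 ≤ c)
    (h : ∀ k ≤ n, topk k u ≤ c * topk k v) : p u ≤ c * p v := by
  obtain ⟨w, hw, hwu, hwp⟩ := exists_nonneg_weights_sum_mul_eq hp hu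
  obtain ⟨σ, hσ⟩ := exists_perm_antitone_comp w
  obtain ⟨τ, hτ⟩ := exists_perm_antitone_comp v
  have hvτ : 0 ≤ v ∘ τ := fun i ↦ hv (τ i)
  have sum_castLE_le (k : ℕ) (hk : k ≤ n) :
      ∑ i : Fin k, (u ∘ σ) (i.castLE hk) ≤ ∑ i : Fin k, c * (v ∘ τ) (i.castLE hk) :=
    calc ∑ i : Fin k, (u ∘ σ) (i.castLE hk) ≤ topk k (u ∘ σ) :=
          (sum_le_sum fun _ _ ↦ le_abs_self _).trans (sum_abs_castLE_le_topk hk _)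
      _ = topk k u := topk_comp_perm k u σ
      _ ≤ c * topk k v := h k hk
      _ = c * topk k (v ∘ τ) := by rw [topk_comp_perm]
      _ = ∑ i : Fin k, c * (v ∘ τ) (i.castLE hk) := by
          rw [topk_eq_sum_castLE_of_antitone hτ hvτ hk, mul_sum]
  let π : Equiv.Perm (Fin n) := τ * σ⁻¹
  calc p u = ∑ i, (w ∘ σ) i * (u ∘ σ) i := by
        rw [← hwu, ← Equiv.sum_comp σ]
        rfl
    _ ≤ ∑ i, (w ∘ σ) i * (c * (v ∘ τ) i) :=
        sum_mul_le_sum_mul_of_sum_castLE_le hσ (fun i ↦ hw (σ i)) sum_castLE_le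
    _ = c * ∑ i, w i * (v ∘ π) i := by
        rw [mul_sum, ← Equiv.sum_comp σ fun i ↦ c * (w i * (v ∘ π) i)]
        simp [π, mul_left_comm]
    _ ≤ c * p (v ∘ π) := mul_le_mul_of_nonneg_left (hwp _ fun i ↦ hv (π i)) hc
    _ = c * p v := by rw [hp_symm]

end FanDominance

section Expansion

/-- The index `⌊k⌋` of the entry of `ρ` that the expansion repeats at position `k`: the largest
element of `POS` that is at most `k`, with value `0` if there is none. -/
noncomputable def floorIdx (POS : Set ℕ) (k : ℕ) : ℕ := sSup (POS ∩ Set.Iic k)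

theorem isGreatest_floorIdx {POS : Set ℕ} {k : ℕ} (h : (POS ∩ Set.Iic k).Nonempty) :
    IsGreatest (POS ∩ Set.Iic k) (floorIdx POS k) :=
  ⟨Nat.sSup_mem h (bddAbove_Iic.mono Set.inter_subset_right),
    fun _ ht ↦ le_csSup (bddAbove_Iic.mono Set.inter_subset_right) ht⟩

theorem expandVec_apply {n : ℕ} (POS : Set ℕ) (ρ : ℕ → ℝ) (i : Fin n) :
    expandVec n POS ρ i = ρ (floorIdx POS (i + 1)) := by
  unfold expandVec
  split_ifs with hi
  · have greatest : IsGreatest (POS ∩ Set.Iic (i + 1 : ℕ)) (i + 1) :=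
      ⟨⟨hi, Set.self_mem_Iic⟩, fun _ h ↦ h.2⟩
    rw [floorIdx, greatest.csSup_eq]
  · have : {t | t ∈ POS ∧ t < (i : ℕ) + 1} = POS ∩ Set.Iic (i + 1 : ℕ) := by
      ext t
      exact and_congr_right fun ht ↦ ⟨le_of_lt, fun hle ↦ hle.lt_of_ne fun h ↦ hi (h ▸ ht)⟩
    rw [prevIdx, floorIdx, this]

variable {n : ℕ} {POS : Set ℕ} {ρ : ℕ → ℝ}

theorem isGreatest_floorIdx_succ (h₁ : 1 ∈ POS) (i : ℕ) :
    IsGreatest (POS ∩ Set.Iic (i + 1)) (floorIdx POS (i + 1)) :=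
  isGreatest_floorIdx ⟨1, h₁, Nat.le_add_left 1 i⟩

theorem expandVec_nonneg (h₁ : 1 ∈ POS) (hρ : ∀ t ∈ POS, 0 ≤ ρ t) : 0 ≤ expandVec n POS ρ := by
  intro i
  rw [expandVec_apply]
  exact hρ _ (isGreatest_floorIdx_succ h₁ i).1.1

theorem antitone_expandVec (h₁ : 1 ∈ POS) (hρ : AntitoneOn ρ POS) :
    Antitone (expandVec n POS ρ) := by
  intro i j hij
  have hi := isGreatest_floorIdx_succ h₁ i
  have hj := isGreatest_floorIdx_succ h₁ j
  rw [expandVec_apply, expandVec_apply]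
  exact hρ hi.1.1 hj.1.1 (hj.2 ⟨hi.1.1, hi.1.2.trans (Nat.succ_le_succ hij)⟩)

theorem topk_expandVec_le (h₁ : 1 ∈ POS) {c : ℝ} (hc : 0 ≤ c)
    (hPOS : ∀ k, 1 ≤ k → k ≤ n → (k : ℝ) ≤ c * floorIdx POS k)
    (hρ_nn : ∀ t ∈ POS, 0 ≤ ρ t) (hρ : AntitoneOn ρ POS)
    {o : Fin n → ℝ} (ho : Antitone o) (ho₀ : 0 ≤ o) {δ : ℝ} (hρo : ∀ t ∈ POS, ρ t ≤ ent o t + δ)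
    {k : ℕ} (hk : k ≤ n) :
    topk k (expandVec n POS ρ) ≤ c * topk k o + k * δ := by
  have floorIdx_pos (i : ℕ) : 1 ≤ floorIdx POS (i + 1) :=
    (isGreatest_floorIdx_succ h₁ i).2 ⟨h₁, Nat.le_add_left 1 i⟩
  have floorIdx_le (i : ℕ) : floorIdx POS (i + 1) ≤ i + 1 := (isGreatest_floorIdx_succ h₁ i).1.2
  let q : Fin k → Fin k := fun i ↦
    ⟨floorIdx POS (i + 1) - 1, (Nat.sub_le_of_le_add (floorIdx_le i)).trans_lt i.isLt⟩
  have hq (i : Fin k) : (i + 1 : ℝ) ≤ c * (q i + 1) := by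
    have hgap := hPOS (i + 1) (Nat.le_add_left 1 _) (i.isLt.trans_le hk)
    push_cast [q, Nat.cast_sub (floorIdx_pos i)] at hgap ⊢
    simpa using hgap
  have expandVec_le (i : Fin k) :
      expandVec n POS ρ (i.castLE hk) ≤ o ((q i).castLE hk) + δ := by
    rw [expandVec_apply]
    refine (hρo _ (isGreatest_floorIdx_succ h₁ i).1.1).trans_eq ?_
    simp only [ent, q]
    rw [dif_pos]
    rfl
  rw [topk_eq_sum_castLE_of_antitone (antitone_expandVec h₁ hρ) (expandVec_nonneg h₁ hρ_nn) hk,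
    topk_eq_sum_castLE_of_antitone ho ho₀ hk]
  calc ∑ i : Fin k, expandVec n POS ρ (i.castLE hk)
      ≤ ∑ i : Fin k, (o ((q i).castLE hk) + δ) := sum_le_sum fun i _ ↦ expandVec_le i
    _ = ∑ i : Fin k, o ((q i).castLE hk) + k * δ := by simp [sum_add_distrib]
    _ ≤ c * ∑ i : Fin k, o (i.castLE hk) + k * δ := by
        gcongr
        exact sum_comp_le_mul_sum (ho.comp_monotone (Fin.strictMono_castLE hk).monotone)
          (fun i ↦ ho₀ _) hc hq

end Expansion

section GeometricIndexSet

variable {n : ℕ} {ε : ℝ}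

theorem one_mem_geomPOS (n : ℕ) (ε : ℝ) : 1 ∈ geomPOS n ε := ⟨0, rfl⟩

theorem le_of_mem_geomPOS (hn : 1 ≤ n) {k : ℕ} (hk : k ∈ geomPOS n ε) : k ≤ n := by
  obtain ⟨_ | s, rfl⟩ := hk
  · exact hn
  · exact min_le_left _ _

theorem one_le_posSeq (hn : 1 ≤ n) (hε : 0 ≤ ε) (s : ℕ) : 1 ≤ posSeq n ε s := by
  induction s with
  | zero => exact le_rfl
  | succ s ih =>
    have : (0 : ℝ) < posSeq n ε s := by exact_mod_cast ih
    exact le_min hn (Nat.ceil_pos.2 (by positivity))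

theorem le_mul_floorIdx_geomPOS (hε : 0 < ε) {k : ℕ} (hk₁ : 1 ≤ k) (hkn : k ≤ n) :
    (k : ℝ) ≤ (1 + ε) * floorIdx (geomPOS n ε) k := by
  obtain ⟨⟨⟨s, hs⟩, -⟩, le_floor⟩ := isGreatest_floorIdx ⟨1, one_mem_geomPOS n ε, hk₁⟩
  rw [← hs] at le_floor ⊢
  have hpos : (0 : ℝ) < posSeq n ε s := by exact_mod_cast one_le_posSeq (hk₁.trans hkn) hε.le s
  have step_lt : posSeq n ε s < ⌈(1 + ε) * posSeq n ε s⌉₊ := Nat.lt_ceil.2 (by nlinarith)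
  rcases le_or_gt (posSeq n ε (s + 1)) k with hle | hlt
  · -- The next element is still at most `k`, so it is not larger: the sequence has reached `n`.
    have next_le : min n ⌈(1 + ε) * posSeq n ε s⌉₊ ≤ posSeq n ε s := le_floor ⟨⟨s + 1, rfl⟩, hle⟩
    have hk : (k : ℝ) ≤ posSeq n ε s := by
      exact_mod_cast hkn.trans ((min_le_iff.1 next_le).resolve_right step_lt.not_ge)
    nlinarith
  · exact (Nat.lt_ceil.1 (lt_min_iff.1 hlt).2).le

end GeometricIndexSet

theorem expansion_norm_bound_general {n : ℕ} {ε : ℝ} (hε : 0 < ε)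
    {o : Fin n → ℝ} (ho : Antitone o) (ho₀ : 0 ≤ o) {ρ : ℕ → ℝ}
    (hρ_nn : ∀ k ∈ geomPOS n ε, 0 ≤ ρ k) (hρ : AntitoneOn ρ (geomPOS n ε))
    (hρo : ∀ k ∈ geomPOS n ε, ρ k ≤ ent o k + 2 * ε / n * ent o 1) :
    (∀ k ≤ n, topk k (expandVec n (geomPOS n ε) ρ) ≤ (1 + 3 * ε) * topk k o) ∧
    ∀ p : Seminorm ℝ (Fin n → ℝ), MonotoneOn p (Set.Ici 0) →
      (∀ w (π : Equiv.Perm (Fin n)), p (w ∘ π) = p w) →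
      p (expandVec n (geomPOS n ε) ρ) ≤ (1 + 3 * ε) * p o := by
  have h₁ := one_mem_geomPOS n ε
  have topk_bound (k : ℕ) (hk : k ≤ n) :
      topk k (expandVec n (geomPOS n ε) ρ) ≤ (1 + 3 * ε) * topk k o :=
    calc topk k (expandVec n (geomPOS n ε) ρ)
        ≤ (1 + ε) * topk k o + k * (2 * ε / n * ent o 1) :=
          topk_expandVec_le h₁ (by positivity) (fun _ ↦ le_mul_floorIdx_geomPOS hε) hρ_nn hρ ho ho₀
            hρo hk
      _ = (1 + ε) * topk k o + 2 * ε * (k / n * ent o 1) := by ring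
      _ ≤ (1 + ε) * topk k o + 2 * ε * topk k o := by
          gcongr
          exact div_mul_ent_one_le_topk o hk
      _ = (1 + 3 * ε) * topk k o := by ring
  exact ⟨topk_bound, fun p hp hp_symm ↦ seminorm_le_mul_of_topk_le_mul hp hp_symm
    (expandVec_nonneg h₁ hρ_nn) ho₀ (by positivity) topk_bound⟩

/-- Lemma 2.7 of Ibrahimpur–Swamy (as used for the PTAS): if `ε ∈ (0,1/2]`, `o ∈ ℝ^n` is
non-increasing, nonnegative, with `o_1 = 1`, and `ρ : POS → ℝ_{≥0}` is non-increasing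
with `ρ_k ≤ o_k + 2ε/n` on `POS`, then the expansion `ρ⃗` satisfies
`Top_k(ρ⃗) ≤ (1+3ε)·Top_k(o)` for `k ∈ POS`, `Top_k(ρ⃗) ≤ (1+11ε)·Top_k(o)` for all
`k ∈ {1,…,n}`, and hence `ψ(ρ⃗) ≤ (1+11ε)·ψ(o)` for every symmetric monotone norm. -/
theorem expansion_norm_bound {n : ℕ} (hn : 1 ≤ n)
    (ε : ℝ) (hε : 0 < ε) (hε2 : ε ≤ 1 / 2)
    (o : Fin n → ℝ) (ho_mono : Antitone o) (ho_nn : ∀ i, 0 ≤ o i) (ho1 : ent o 1 = 1)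
    (ρ : ℕ → ℝ)
    (hρ_nn : ∀ k ∈ geomPOS n ε, 0 ≤ ρ k)
    (hρ_mono : ∀ k ∈ geomPOS n ε, ∀ k' ∈ geomPOS n ε, k ≤ k' → ρ k' ≤ ρ k)
    (hρ_le : ∀ k ∈ geomPOS n ε, ρ k ≤ ent o k + 2 * ε / n) :
    (∀ k ∈ geomPOS n ε,
        topk k (expandVec n (geomPOS n ε) ρ) ≤ (1 + 3 * ε) * topk k o) ∧
    (∀ k, 1 ≤ k → k ≤ n →
        topk k (expandVec n (geomPOS n ε) ρ) ≤ (1 + 11 * ε) * topk k o) ∧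
    (∀ ψ : (Fin n → ℝ) → ℝ,
        (∀ w, ψ w = 0 ↔ w = 0) →
        (∀ w₁ w₂, ψ (w₁ + w₂) ≤ ψ w₁ + ψ w₂) →
        (∀ (θ : ℝ) w, ψ (θ • w) = |θ| * ψ w) →
        (∀ w₁ w₂, (∀ i, 0 ≤ w₁ i) → (∀ i, w₁ i ≤ w₂ i) → ψ w₁ ≤ ψ w₂) →
        (∀ w (π : Equiv.Perm (Fin n)), ψ (w ∘ π) = ψ w) →
        ψ (expandVec n (geomPOS n ε) ρ) ≤ (1 + 11 * ε) * ψ o) := by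
  have hρo : ∀ k ∈ geomPOS n ε, ρ k ≤ ent o k + 2 * ε / n * ent o 1 := by simpa [ho1] using hρ_le
  have hρ_anti : AntitoneOn ρ (geomPOS n ε) := fun k hk k' hk' ↦ hρ_mono k hk k' hk'
  obtain ⟨topk_bound, seminorm_bound⟩ := expansion_norm_bound_general hε ho_mono ho_nn hρ_nn
    hρ_anti hρo
  refine ⟨fun k hk ↦ topk_bound k (le_of_mem_geomPOS hn hk), fun k _ hk ↦ ?_, ?_⟩
  · exact (topk_bound k hk).trans (mul_le_mul_of_nonneg_right (by linarith) (topk_nonneg k o))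
  · intro ψ _ hψ_add hψ_smul hψ_mono hψ_symm
    let p : Seminorm ℝ (Fin n → ℝ) := .of ψ hψ_add hψ_smul
    have hp : MonotoneOn p (Set.Ici 0) := fun w₁ hw₁ w₂ _ h ↦ hψ_mono w₁ w₂ hw₁ h
    exact (seminorm_bound p hp hψ_symm).trans
      (mul_le_mul_of_nonneg_right (by linarith) (apply_nonneg p o))
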